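/- Coarea-type volume identity: let n ≥ 1, let F⁰ be the dual of a Minkowski-type norm F on ℝ^{n+1}, let L = {x ∈ ℝ^{n+1} : F⁰(x) < 1} be the open Wulff body, and let a > 0. Then the Lebesgue integral of 1/F⁰ over the dilated body satisfies ∫_{a·L} (F⁰(x))⁻¹ dx = ((n+1)/n) · aⁿ · Vol(L), where Vol denotes (n+1)-dimensional Lebesgue measure. -/

import Mathlib

/-!
Write `G` for the dual norm and `V` for the volume of `L = {G < 1}`. The function `G` is measurable
(a supremum of linear functions), positive away from the origin and positively 1-homogeneous, so
`r • L = {G < r}` has volume `r ^ (n + 1) * V` for every `r > 0`.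

By the layer-cake formula the integral of `G⁻¹` over `{G < a}` is the integral over `t > 0` of the
volume of `{t < G⁻¹} ∩ {G < a}`, which up to the origin is `{G < min a t⁻¹}`. This gives
`V * ∫ min(a, t⁻¹) ^ (n + 1) dt`; splitting at `t = a⁻¹` the two pieces are `a ^ n` and `a ^ n / n`,
the second one being finite because `n ≥ 1`.

The computation takes place in `ℝ≥0∞`, so neither integrability of `G⁻¹` nor finiteness of `V` has
to be established separately.
-/

open scoped RealInnerProductSpace
open MeasureTheory
noncomputable section

/-- Euclidean space `ℝ^{n+1}`. -/
abbrev Euc (n : ℕ) := EuclideanSpace ℝ (Fin (n + 1))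

/-- A Minkowski-type norm on `ℝ^{n+1}` with comparison constants `c ≤ C`:
`F 0 = 0`, `F` convex, positively 1-homogeneous and `c‖x‖ ≤ F x ≤ C‖x‖`. -/
structure IsMinkowskiTypeNorm (n : ℕ) (F : Euc n → ℝ) (c C : ℝ) : Prop where
  zero : F 0 = 0
  convexOn : ConvexOn ℝ Set.univ F
  homog : ∀ l : ℝ, 0 < l → ∀ x : Euc n, F (l • x) = l * F x
  c_pos : 0 < c
  c_le_C : c ≤ C
  lower : ∀ x : Euc n, c * ‖x‖ ≤ F x
  upper : ∀ x : Euc n, F x ≤ C * ‖x‖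

/-- The dual norm `F⁰(x) = sup_{y ≠ 0} ⟪x, y⟫ / F(y)`. -/
def dualNorm (n : ℕ) (F : Euc n → ℝ) (x : Euc n) : ℝ :=
  ⨆ y : {y : Euc n // y ≠ 0}, ⟪x, (y : Euc n)⟫ / F (y : Euc n)

open scoped Pointwise

section WulffBody

variable {n : ℕ} {F : Euc n → ℝ} {c C : ℝ}

lemma IsMinkowskiTypeNorm.pos (hF : IsMinkowskiTypeNorm n F c C) {y : Euc n} (hy : y ≠ 0) :
    0 < F y :=
  (mul_pos hF.c_pos (norm_pos_iff.2 hy)).trans_le (hF.lower y)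

/-- The supremum defining the dual norm is over a set bounded by `‖x‖ / c`, so it is a genuine
supremum and not the junk value `0`. -/
lemma IsMinkowskiTypeNorm.bddAbove (hF : IsMinkowskiTypeNorm n F c C) (x : Euc n) :
    BddAbove (Set.range fun y : {y : Euc n // y ≠ 0} => ⟪x, (y : Euc n)⟫ / F (y : Euc n)) := by
  refine ⟨‖x‖ / c, ?_⟩
  rintro _ ⟨⟨y, hy⟩, rfl⟩
  have hc := hF.c_pos
  rw [div_le_div_iff₀ (hF.pos hy) hc]
  calc ⟪x, y⟫ * c ≤ (‖x‖ * ‖y‖) * c := by gcongr; exact real_inner_le_norm x y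
    _ = ‖x‖ * (c * ‖y‖) := by ring
    _ ≤ ‖x‖ * F y := by gcongr; exact hF.lower y

lemma IsMinkowskiTypeNorm.dualNorm_pos (hF : IsMinkowskiTypeNorm n F c C) {x : Euc n}
    (hx : x ≠ 0) : 0 < dualNorm n F x := by
  have h : 0 < ⟪x, x⟫ / F x := div_pos (real_inner_self_pos.2 hx) (hF.pos hx)
  exact h.trans_le (le_ciSup (hF.bddAbove x) ⟨x, hx⟩)

lemma dualNorm_smul {r : ℝ} (hr : 0 ≤ r) (x : Euc n) :
    dualNorm n F (r • x) = r * dualNorm n F x := by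
  simp only [dualNorm, real_inner_smul_left, mul_div_assoc]
  exact (Real.mul_iSup_of_nonneg hr _).symm

lemma IsMinkowskiTypeNorm.measurable_dualNorm (hF : IsMinkowskiTypeNorm n F c C) :
    Measurable (dualNorm n F) := by
  refine (lowerSemicontinuous_ciSup hF.bddAbove fun y => ?_).measurable
  exact Continuous.lowerSemicontinuous (by fun_prop)

lemma smul_wulff {r : ℝ} (hr : 0 < r) :
    r • {x : Euc n | dualNorm n F x < 1} = {x | dualNorm n F x < r} := by
  ext x
  rw [Set.mem_smul_set_iff_inv_smul_mem₀ hr.ne', Set.mem_ofPred_eq, Set.mem_ofPred_eq,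
    dualNorm_smul (inv_nonneg.2 hr.le), inv_mul_lt_iff₀ hr, mul_one]

lemma volume_dualNorm_lt {r : ℝ} (hr : 0 < r) :
    volume {x : Euc n | dualNorm n F x < r} =
      ENNReal.ofReal (r ^ (n + 1)) * volume {x : Euc n | dualNorm n F x < 1} := by
  rw [← smul_wulff hr, Measure.addHaar_smul, finrank_euclideanSpace_fin,
    abs_of_nonneg (by positivity)]

/-- The superlevel sets of `1 / F⁰` inside `{F⁰ < a}`, as they enter the layer-cake formula. They
agree with `{F⁰ < min a t⁻¹}` up to the origin, where `(F⁰)⁻¹` has the junk value `0`. -/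
lemma IsMinkowskiTypeNorm.volume_lt_inv_dualNorm (hF : IsMinkowskiTypeNorm n F c C) {a t : ℝ}
    (ha : 0 < a) (ht : 0 < t) :
    volume.restrict {x : Euc n | dualNorm n F x < a} {x | t < (dualNorm n F x)⁻¹} =
      ENNReal.ofReal (min a t⁻¹ ^ (n + 1)) * volume {x : Euc n | dualNorm n F x < 1} := by
  have hms : MeasurableSet {x : Euc n | t < (dualNorm n F x)⁻¹} :=
    measurableSet_lt measurable_const hF.measurable_dualNorm.inv
  rw [← volume_dualNorm_lt (lt_min ha (inv_pos.2 ht)), Measure.restrict_apply hms]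
  refine measure_congr ?_
  have h0 : ∀ᵐ x : Euc n, x ≠ 0 := Measure.ae_ne volume 0
  filter_upwards [h0] with x hx
  have hpos := hF.dualNorm_pos hx
  refine propext ?_
  change (t < (dualNorm n F x)⁻¹ ∧ dualNorm n F x < a) ↔ dualNorm n F x < min a t⁻¹
  rw [lt_min_iff, lt_inv_comm₀ ht hpos, and_comm]

lemma lintegral_min_inv_pow (hn : 1 ≤ n) {a : ℝ} (ha : 0 < a) :
    ∫⁻ t in Set.Ioi (0 : ℝ), ENNReal.ofReal (min a t⁻¹ ^ (n + 1)) =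
      ENNReal.ofReal ((n + 1 : ℝ) / n * a ^ n) := by
  have hn' : (0 : ℝ) < n := by exact_mod_cast hn
  have hai : 0 < a⁻¹ := inv_pos.2 ha
  have h1 : ∫⁻ t in Set.Ioc 0 a⁻¹, ENNReal.ofReal (min a t⁻¹ ^ (n + 1)) =
      ENNReal.ofReal (a ^ n) := by
    have : ∀ t ∈ Set.Ioc 0 a⁻¹, ENNReal.ofReal (min a t⁻¹ ^ (n + 1)) =
        ENNReal.ofReal (a ^ (n + 1)) := by
      intro t ht
      rw [min_eq_left ((le_inv_comm₀ ht.1 ha).1 ht.2)]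
    rw [setLIntegral_congr_fun measurableSet_Ioc this, setLIntegral_const, Real.volume_Ioc,
      ← ENNReal.ofReal_mul (by positivity)]
    congr 1
    field_simp
    ring
  have h2 : ∫⁻ t in Set.Ioi a⁻¹, ENNReal.ofReal (min a t⁻¹ ^ (n + 1)) =
      ENNReal.ofReal (a ^ n / n) := by
    have : ∀ t ∈ Set.Ioi a⁻¹, ENNReal.ofReal (min a t⁻¹ ^ (n + 1)) =
        ENNReal.ofReal (t ^ (-(n + 1 : ℝ))) := by
      intro t ht
      have ht0 : 0 < t := hai.trans ht
      rw [min_eq_right ((inv_le_comm₀ ha ht0).1 (le_of_lt ht)), Real.rpow_neg ht0.le, inv_pow]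
      norm_cast
    have hlt : -(n + 1 : ℝ) < -1 := by linarith
    rw [setLIntegral_congr_fun measurableSet_Ioi this,
      ← ofReal_integral_eq_lintegral_ofReal (integrableOn_Ioi_rpow_of_lt hlt hai),
      integral_Ioi_rpow_of_lt hlt hai]
    · congr 1
      rw [show -(n + 1 : ℝ) + 1 = -n by ring, neg_div_neg_eq, Real.rpow_neg hai.le,
        Real.rpow_natCast, inv_pow, inv_inv]
    · filter_upwards [ae_restrict_mem measurableSet_Ioi] with t ht
      exact Real.rpow_nonneg (hai.trans ht).le _
  rw [← Set.Ioc_union_Ioi_eq_Ioi hai.le,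
    lintegral_union measurableSet_Ioi (Set.Ioc_disjoint_Ioi le_rfl), h1, h2,
    ← ENNReal.ofReal_add (by positivity) (by positivity)]
  congr 1
  field_simp

end WulffBody

/-- Coarea-type volume identity: for `n ≥ 1` and `a > 0`,
`∫_{a·L} (F⁰(x))⁻¹ dx = ((n+1)/n) · aⁿ · Vol(L)` where `L = {F⁰ < 1}`. -/
theorem integral_inv_dualNorm_over_dilated_wulff (n : ℕ) (hn : 1 ≤ n)
    (F : Euc n → ℝ) (c C : ℝ) (hF : IsMinkowskiTypeNorm n F c C)
    (a : ℝ) (ha : 0 < a) :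
    ∫ x in a • {x : Euc n | dualNorm n F x < 1}, (dualNorm n F x)⁻¹ =
      ((n + 1 : ℝ) / n) * a ^ n *
        (volume {x : Euc n | dualNorm n F x < 1}).toReal := by
  have hm := hF.measurable_dualNorm
  have hnn : ∀ x : Euc n, 0 ≤ (dualNorm n F x)⁻¹ := by
    intro x
    rcases eq_or_ne x 0 with rfl | hx
    · simp [dualNorm]
    · exact (inv_pos.2 (hF.dualNorm_pos hx)).le
  rw [smul_wulff ha, integral_eq_lintegral_of_nonneg_ae (Filter.Eventually.of_forall hnn)
      hm.inv.aestronglyMeasurable,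
    lintegral_eq_lintegral_meas_lt _ (Filter.Eventually.of_forall hnn) hm.inv.aemeasurable,
    setLIntegral_congr_fun measurableSet_Ioi
      (fun t ht => hF.volume_lt_inv_dualNorm ha (Set.mem_Ioi.1 ht)),
    lintegral_mul_const _ (by fun_prop), lintegral_min_inv_pow hn ha, ENNReal.toReal_mul,
    ENNReal.toReal_ofReal (by positivity)]
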